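/- Let a finite group G act linearly on V = K² (char K = 0) and let U, W be finite-dimensional G-representations. Then for the G-equivariant skyscraper sheaves at the origin: Ext^0_G(O_0 ⊗ U, O_0 ⊗ W) ≅ Hom_G(U,W), Ext^1_G(O_0 ⊗ U, O_0 ⊗ W) ≅ Hom_G(U ⊗ V^∨, W), and Ext^2_G(O_0 ⊗ U, O_0 ⊗ W) ≅ Hom_G(U ⊗ det(V^∨), W). In particular, if U and W are irreducible then O_0 ⊗ U and O_0 ⊗ W are orthogonal in degree 0 unless U ≅ W, Ext^1 has dimension equal to the multiplicity of W in U ⊗ V^∨, and Ext^2 is one-dimensional iff W ≅ U ⊗ det(V^∨) and zero otherwise. -/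

import Mathlib

noncomputable section

/-- The space of `G`-equivariant homomorphisms of `R`-modules `P → W`, where
`R = K[x,y]`, `P` carries a semilinear `G`-action `ρP` and `W` is the skyscraper
`G`-module at the origin (so `R` acts on `W` through evaluation at `0`). -/
def skyHom {K : Type*} [Field K] {G : Type*} [Group G]
    {P : Type*} [AddCommGroup P] [Module K P] [Module (MvPolynomial (Fin 2) K) P]
    {W : Type*} [AddCommGroup W] [Module K W]
    (ρP : Representation K G P) (ρW : Representation K G W) :
    Submodule K (P →ₗ[K] W) where
  carrier := {ψ | (∀ (r : MvPolynomial (Fin 2) K) (p : P),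
      ψ (r • p) = (MvPolynomial.eval (0 : Fin 2 → K) r) • ψ p) ∧
    ∀ (g : G) (p : P), ψ (ρP g p) = ρW g (ψ p)}
  zero_mem' := by constructor <;> intro _ _ <;> simp
  add_mem' := by
    rintro ψ₁ ψ₂ ⟨h1, h1'⟩ ⟨h2, h2'⟩
    constructor
    · intro r p
      simp only [LinearMap.add_apply, h1 r p, h2 r p, smul_add]
    · intro g p
      simp only [LinearMap.add_apply, h1' g p, h2' g p, map_add]
  smul_mem' := by
    rintro c ψ ⟨h, h'⟩
    constructor
    · intro r p
      simp only [LinearMap.smul_apply, h r p]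
      rw [smul_comm]
    · intro g p
      simp only [LinearMap.smul_apply, h' g p, map_smul]

/-- The space `Hom_G(U, W)` of equivariant maps between two representations. -/
def equivariantHoms {K : Type*} [Field K] {G : Type*} [Group G]
    {U : Type*} [AddCommGroup U] [Module K U]
    {W : Type*} [AddCommGroup W] [Module K W]
    (ρU : Representation K G U) (ρW : Representation K G W) :
    Submodule K (U →ₗ[K] W) where
  carrier := {ψ | ∀ (g : G) (u : U), ψ (ρU g u) = ρW g (ψ u)}
  zero_mem' := by intro _ _; simp
  add_mem' := by
    intro ψ₁ ψ₂ h1 h2 g u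
    simp only [LinearMap.add_apply, h1 g u, h2 g u, map_add]
  smul_mem' := by
    intro c ψ h g u
    simp only [LinearMap.smul_apply, h g u, map_smul]

/-- The space `Hom_G(U ⊗ V^∨, W)`, where `V = K²` with the linear `G`-action `φ`:
a `G`-equivariant map `U ⊗ V^∨ → W` is a pair `q = (q 0, q 1)` of linear maps
`U → W` (`q i = Φ(- ⊗ xᵢ)`) satisfying the indicated intertwining relation. -/
def ext1Target {K : Type*} [Field K] {G : Type*} [Group G]
    (φ : G →* ((Fin 2 → K) ≃ₗ[K] (Fin 2 → K)))
    {U : Type*} [AddCommGroup U] [Module K U]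
    {W : Type*} [AddCommGroup W] [Module K W]
    (ρU : Representation K G U) (ρW : Representation K G W) :
    Submodule K (Fin 2 → (U →ₗ[K] W)) where
  carrier := {q | ∀ (g : G) (i : Fin 2) (u : U),
    ρW g (q i u) = ∑ j : Fin 2, ((φ g⁻¹) (Pi.single j (1 : K)) i) • q j (ρU g u)}
  zero_mem' := by intro _ _ _; simp
  add_mem' := by
    intro q q' h h' g i u
    simp only [Pi.add_apply, LinearMap.add_apply, map_add, h g i u, h' g i u, smul_add,
      Finset.sum_add_distrib]
  smul_mem' := by
    intro c q h g i u
    simp only [Pi.smul_apply, LinearMap.smul_apply, map_smul, h g i u, Finset.smul_sum]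
    congr 1
    ext j
    rw [smul_comm]

/-- The space `Hom_G(U ⊗ det V^∨, W)`: linear maps `U → W` intertwining the actions up
to the determinant character `g ↦ det(φ g⁻¹)`. -/
def ext2Target {K : Type*} [Field K] {G : Type*} [Group G]
    (φ : G →* ((Fin 2 → K) ≃ₗ[K] (Fin 2 → K)))
    {U : Type*} [AddCommGroup U] [Module K U]
    {W : Type*} [AddCommGroup W] [Module K W]
    (ρU : Representation K G U) (ρW : Representation K G W) :
    Submodule K (U →ₗ[K] W) where
  carrier := {ψ | ∀ (g : G) (u : U),
    ρW g (ψ u) = (LinearMap.det ((φ g⁻¹ : (Fin 2 → K) ≃ₗ[K] (Fin 2 → K)) :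
      (Fin 2 → K) →ₗ[K] (Fin 2 → K))) • ψ (ρU g u)}
  zero_mem' := by intro _ _; simp
  add_mem' := by
    intro ψ₁ ψ₂ h1 h2 g u
    simp only [LinearMap.add_apply, map_add, h1 g u, h2 g u, smul_add]
  smul_mem' := by
    intro c ψ h g u
    simp only [LinearMap.smul_apply, map_smul, h g u]
    rw [smul_comm]

/-!
Write `R = K[x₀, x₁]` and let `𝔪` be its ideal at the origin. By Maschke's theorem, the `n`-th
cohomology of the complex of equivariant maps `Pᵢ → O₀ ⊗ W` is `Hom_G(Torₙ(O₀ ⊗ U, R / 𝔪), W)`.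
For `n ≥ 1`, dimension shifting along the image `Z` of `Pₙ → Pₙ₋₁` gives
`Torₙ(O₀ ⊗ U, R / 𝔪) = (Z ∩ 𝔪 Pₙ₋₁) / 𝔪 Z`. For `n = 1, 2` this quotient is identified with
`U ⊗ Λⁿ V^∨` by the comparison maps out of the Koszul complex, `u ⊗ xᵢ ↦ xᵢ s(u)` and
`u ↦ x₀ t₁(u) - x₁ t₀(u)`, where `s` is a linear section of `P₀ → U` and `tᵢ(u)` is a preimage of
`xᵢ s(u)` in `P₁`. The linear maps `s` and `tᵢ` need not be equivariant: the Koszul maps commute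
with `G` up to `𝔪 Z`, and so become equivariant on the quotient.
-/

namespace EquivariantSkyscraper

open MvPolynomial

section Maschke

variable {K A B W : Type*} [Field K] [AddCommGroup A] [Module K A] [AddCommGroup B] [Module K B]
  [AddCommGroup W] [Module K W]

lemma exists_comp_eq_of_ker_le (f : A →ₗ[K] B) (ψ : A →ₗ[K] W) (h : f.ker ≤ ψ.ker) :
    ∃ χ : B →ₗ[K] W, χ ∘ₗ f = ψ := by
  obtain ⟨χ, hχ⟩ := (f.ker.liftQ ψ h ∘ₗ f.quotKerEquivRange.symm.toLinearMap).exists_extend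
  refine ⟨χ, LinearMap.ext fun a ↦ ?_⟩
  simpa using LinearMap.congr_fun hχ (f.quotKerEquivRange (f.ker.mkQ a))

variable {G : Type*} [Group G] {ρA : Representation K G A} {ρB : Representation K G B}
  {ρW : Representation K G W}

lemma mem_equivariantHoms_iff_mem_invariants {ψ : A →ₗ[K] B} :
    ψ ∈ equivariantHoms ρA ρB ↔ ψ ∈ (ρA.linHom ρB).invariants := by
  refine ⟨fun h g ↦ LinearMap.ext fun a ↦ ?_, fun h g a ↦ ?_⟩
  · simp [← h g]
  · simpa using (LinearMap.congr_fun (h g) (ρA g a)).symm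

-- Maschke's theorem: averaging over `G` makes any linear extension of `ψ` along `f` equivariant.
lemma exists_mem_equivariantHoms_comp_eq [NeZero (Nat.card G : K)] {f : A →ₗ[K] B}
    (hf : f ∈ equivariantHoms ρA ρB) {ψ : A →ₗ[K] W} (hψ : ψ ∈ equivariantHoms ρA ρW)
    (h : f.ker ≤ ψ.ker) : ∃ χ ∈ equivariantHoms ρB ρW, χ ∘ₗ f = ψ := by
  have := Nat.finite_of_card_ne_zero (α := G) fun h0 ↦
    NeZero.ne (Nat.card G : K) (by rw [h0, Nat.cast_zero])
  have := Fintype.ofFinite G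
  have : Invertible (Fintype.card G : K) :=
    invertibleOfNonzero (Nat.card_eq_fintype_card (α := G) ▸ NeZero.ne (Nat.card G : K))
  obtain ⟨χ, rfl⟩ := exists_comp_eq_of_ker_le f ψ h
  refine ⟨(ρB.linHom ρW).averageMap χ, mem_equivariantHoms_iff_mem_invariants.2
    (Representation.averageMap_invariant _ χ), ?_⟩
  rw [← Representation.averageMap_id (ρA.linHom ρW) _ (mem_equivariantHoms_iff_mem_invariants.1 hψ)]
  ext a
  simp [Representation.averageMap, GroupAlgebra.average, hf _ a]

lemma exists_mem_equivariantHoms_of_stable [NeZero (Nat.card G : K)] {N : Submodule K B}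
    (hN : ∀ g, N ≤ N.comap (ρB g)) {f : A →ₗ[K] B}
    (hf : ∀ g a, ρB g (f a) - f (ρA g a) ∈ N) {ψ : A →ₗ[K] W}
    (hψ : ψ ∈ equivariantHoms ρA ρW) (h : ∀ a, f a ∈ N → ψ a = 0) :
    ∃ χ ∈ equivariantHoms ρB ρW, (∀ b ∈ N, χ b = 0) ∧ ∀ a, χ (f a) = ψ a := by
  have hmk : N.mkQ ∘ₗ f ∈ equivariantHoms ρA (ρB.quotient N hN) := fun g a ↦
    ((Submodule.Quotient.eq N).2 (hf g a)).symm
  obtain ⟨χ, hχ, hχf⟩ := exists_mem_equivariantHoms_comp_eq hmk hψ fun a ha ↦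
    h a ((Submodule.Quotient.mk_eq_zero N).1 ha)
  refine ⟨χ ∘ₗ N.mkQ, fun g b ↦ hχ g (N.mkQ b), fun b hb ↦ ?_, fun a ↦ LinearMap.congr_fun hχf a⟩
  rw [LinearMap.comp_apply, N.mkQ_apply, (Submodule.Quotient.mk_eq_zero N).2 hb, map_zero]

end Maschke

section SkyHom

lemma sub_C_eval_zero_mem_idealOfVars {ι K : Type*} [CommRing K] (r : MvPolynomial ι K) :
    r - C (eval 0 r) ∈ idealOfVars ι K := by
  rw [← pow_one (idealOfVars ι K), mem_pow_idealOfVars_iff']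
  intro x hx
  obtain rfl : x = 0 := by simpa [Finsupp.degree_eq_zero_iff] using hx
  simp [eval_zero, constantCoeff_eq]

lemma eval_zero_of_mem_idealOfVars {ι K : Type*} [CommRing K] {r : MvPolynomial ι K}
    (hr : r ∈ idealOfVars ι K) : eval 0 r = 0 := by
  rw [← pow_one (idealOfVars ι K), mem_pow_idealOfVars_iff'] at hr
  simpa [eval_zero, constantCoeff_eq] using hr 0 (by simp)

variable {K G : Type*} [Field K] [Group G] {P W : Type*} [AddCommGroup P] [Module K P]
  [Module (MvPolynomial (Fin 2) K) P] [IsScalarTower K (MvPolynomial (Fin 2) K) P]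
  [AddCommGroup W] [Module K W] {ρP : Representation K G P} {ρW : Representation K G W}

lemma mem_skyHom_iff {ψ : P →ₗ[K] W} :
    ψ ∈ skyHom ρP ρW ↔ ψ ∈ equivariantHoms ρP ρW ∧
      ∀ p ∈ idealOfVars (Fin 2) K • (⊤ : Submodule (MvPolynomial (Fin 2) K) P), ψ p = 0 := by
  refine ⟨fun h ↦ ⟨h.2, fun p hp ↦ ?_⟩, fun h ↦ ⟨fun r p ↦ ?_, h.1⟩⟩
  · refine Submodule.smul_induction_on hp (fun r hr p _ ↦ ?_) fun p q hp hq ↦ by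
      rw [map_add, hp, hq, add_zero]
    rw [h.1, eval_zero_of_mem_idealOfVars hr, zero_smul]
  · have := h.2 _ (Submodule.smul_mem_smul (sub_C_eval_zero_mem_idealOfVars r)
      (Submodule.mem_top (x := p)))
    rwa [sub_smul, ← algebraMap_eq, algebraMap_smul, map_sub, ψ.map_smul, sub_eq_zero] at this

end SkyHom

section Tor

variable {K R : Type*} [Field K] [CommRing R]

lemma map_mem_smul {P : Type*} [AddCommGroup P] [Module R P] [Module K P] {I : Ideal R}
    {Z : Submodule R P} {τ : R → R} (hτ : ∀ r ∈ I, τ r ∈ I) {T : P →ₗ[K] P}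
    (hT : ∀ r p, T (r • p) = τ r • T p) (hZ : ∀ z ∈ Z, T z ∈ Z) {p : P} (hp : p ∈ I • Z) :
    T p ∈ I • Z := by
  refine Submodule.smul_induction_on hp (fun r hr z hz ↦ ?_) fun p q hp hq ↦ ?_
  · exact hT r z ▸ Submodule.smul_mem_smul (hτ r hr) (hZ z hz)
  · exact map_add T p q ▸ add_mem hp hq

/-- For a submodule `Z` of a flat module `Q`, the quotient `(Z ⊓ I • Q) / (I • Z)` computes
`Tor₁(Q / Z, R / I)`. This predicate says that `k` presents it, in the sense that `k` induces an
isomorphism from `E` onto that quotient. -/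
structure IsTorPresentation {E Q : Type*} [AddCommGroup E] [Module K E] [AddCommGroup Q]
    [Module K Q] [Module R Q] (I : Ideal R) (Z : Submodule R Q) (k : E →ₗ[K] Q) : Prop where
  map_mem : ∀ e, k e ∈ Z ⊓ I • ⊤
  exists_sub_mem : ∀ q ∈ Z ⊓ I • ⊤, ∃ e, q - k e ∈ I • Z
  eq_zero_of_map_mem : ∀ e, k e ∈ I • Z → e = 0

end Tor

section Cohomology

lemma exists_comp_eq_of_range_le {K A B C : Type*} [Field K] [AddCommGroup A] [Module K A]
    [AddCommGroup B] [Module K B] [AddCommGroup C] [Module K C] (f : A →ₗ[K] B) (g : C →ₗ[K] B)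
    (h : g.range ≤ f.range) : ∃ t : C →ₗ[K] A, f ∘ₗ t = g := by
  obtain ⟨t, ht⟩ := Module.projective_lifting_property f.rangeRestrict
    (g.codRestrict f.range fun c ↦ h ⟨c, rfl⟩) f.surjective_rangeRestrict
  exact ⟨t, LinearMap.ext fun c ↦ congrArg Subtype.val (LinearMap.congr_fun ht c)⟩

lemma nonempty_quotient_comap_equiv {R A B : Type*} [Ring R] [AddCommGroup A] [Module R A]
    [AddCommGroup B] [Module R B] (Φ : A →ₗ[R] B) {S N : Submodule R A} {T : Submodule R B}
    (hT : ∀ a ∈ S, Φ a ∈ T) (hker : ∀ a ∈ S, Φ a = 0 ↔ a ∈ N)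
    (hsurj : ∀ b ∈ T, ∃ a ∈ S, Φ a = b) :
    Nonempty ((↥S ⧸ N.comap S.subtype) ≃ₗ[R] ↥T) := by
  have hN : N.comap S.subtype = (Φ.restrict hT).ker := by
    ext a
    simp [Subtype.ext_iff, hker a.1 a.2]
  have hΦ : Function.Surjective (Φ.restrict hT) := fun b ↦ by
    obtain ⟨a, ha, hab⟩ := hsurj b.1 b.2
    exact ⟨⟨a, ha⟩, Subtype.ext hab⟩
  exact ⟨(Submodule.quotEquivOfEq _ _ hN).trans ((Φ.restrict hT).quotKerEquivOfSurjective hΦ)⟩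

lemma map_eq_zero_of_map_mem_smul_range {K R P' P Q W : Type*} [Field K] [CommRing R]
    [AddCommGroup P'] [Module R P'] [AddCommGroup P] [Module K P] [Module R P]
    [AddCommGroup Q] [Module R Q] [AddCommGroup W] [Module K W]
    {d' : P' →ₗ[R] P} {d : P →ₗ[R] Q} (hex : d.ker = d'.range) {I : Ideal R} {ψ : P →ₗ[K] W}
    (hI : ∀ p ∈ I • (⊤ : Submodule R P), ψ p = 0) (hd' : ∀ p, ψ (d' p) = 0) {p : P}
    (hp : d p ∈ I • d.range) : ψ p = 0 := by
  rw [LinearMap.range_eq_map, ← Submodule.map_smul''] at hp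
  obtain ⟨p₀, hp₀, hd⟩ := hp
  obtain ⟨p', hp'⟩ : p - p₀ ∈ d'.range := hex ▸ LinearMap.sub_mem_ker_iff.2 hd.symm
  rw [← sub_add_cancel p p₀, map_add, hI p₀ hp₀, ← hp', hd', add_zero]

variable {K G : Type*} [Field K] [Group G]
  {σ : G →* (MvPolynomial (Fin 2) K ≃ₐ[K] MvPolynomial (Fin 2) K)} {P' P Q E W : Type*}
  [AddCommGroup P'] [Module K P'] [Module (MvPolynomial (Fin 2) K) P']
  [IsScalarTower K (MvPolynomial (Fin 2) K) P']
  [AddCommGroup P] [Module K P] [Module (MvPolynomial (Fin 2) K) P]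
  [IsScalarTower K (MvPolynomial (Fin 2) K) P]
  [AddCommGroup Q] [Module K Q] [Module (MvPolynomial (Fin 2) K) Q]
  [AddCommGroup E] [Module K E] [AddCommGroup W] [Module K W]
  {ρP : Representation K G P} {ρQ : Representation K G Q} {ρE : Representation K G E}
  {ρW : Representation K G W}
  {d' : P' →ₗ[MvPolynomial (Fin 2) K] P} {d : P →ₗ[MvPolynomial (Fin 2) K] Q}
  {k : E →ₗ[K] Q} {c : E →ₗ[K] P}

local notation "𝔪" => idealOfVars (Fin 2) K

lemma exists_cocycle_comp_eq [NeZero (Nat.card G : K)]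
    (hσ : ∀ g, ∀ r ∈ 𝔪, σ g r ∈ 𝔪) (hsemi : ∀ g r q, ρQ g (r • q) = σ g r • ρQ g q)
    (hd : ∀ g p, d (ρP g p) = ρQ g (d p)) (hdd' : ∀ p, d (d' p) = 0)
    (hc : ∀ e, d (c e) ∈ 𝔪 • d.range → e = 0)
    (hcG : ∀ g e, ρQ g (d (c e)) - d (c (ρE g e)) ∈ 𝔪 • d.range) {θ : E →ₗ[K] W}
    (hθ : θ ∈ equivariantHoms ρE ρW) :
    ∃ ψ ∈ skyHom ρP ρW ⊓ (LinearMap.lcomp K W (d'.restrictScalars K)).ker, ψ ∘ₗ c = θ := by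
  have hrange (g : G) (q : Q) (hq : q ∈ d.range) : ρQ g q ∈ d.range := by
    obtain ⟨p, rfl⟩ := hq
    exact ⟨ρP g p, hd g p⟩
  obtain ⟨ψ, hψ, hψB, hψc⟩ := exists_mem_equivariantHoms_of_stable (ρB := ρP)
    (N := ((𝔪 • d.range).comap d).restrictScalars K) (f := c)
    (fun g p hp ↦ by
      simpa [hd] using map_mem_smul (hσ g) (hsemi g) (hrange g) hp)
    (fun g e ↦ by simpa [hd] using hcG g e) hθ
    fun e he ↦ by rw [hc e he, map_zero]
  refine ⟨ψ, ⟨mem_skyHom_iff.2 ⟨hψ, fun p hp ↦ hψB p ?_⟩, LinearMap.ext fun p ↦ hψB _ ?_⟩,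
    LinearMap.ext hψc⟩
  · have := Submodule.mem_map_of_mem (f := d) hp
    rwa [Submodule.map_smul'', ← LinearMap.range_eq_map] at this
  · simp [hdd']

variable [IsScalarTower K (MvPolynomial (Fin 2) K) Q]

lemma exists_mem_skyHom_comp_eq [NeZero (Nat.card G : K)]
    (hσ : ∀ g, ∀ r ∈ 𝔪, σ g r ∈ 𝔪) (hsemi : ∀ g r q, ρQ g (r • q) = σ g r • ρQ g q)
    (hd : ∀ g p, d (ρP g p) = ρQ g (d p)) {ψ : P →ₗ[K] W} (hψ : ψ ∈ equivariantHoms ρP ρW)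
    (hzero : ∀ p, d p ∈ 𝔪 • (⊤ : Submodule (MvPolynomial (Fin 2) K) Q) → ψ p = 0) :
    ∃ χ ∈ skyHom ρQ ρW, χ ∘ₗ d.restrictScalars K = ψ := by
  obtain ⟨χ, hχ, hχ𝔪, hχd⟩ := exists_mem_equivariantHoms_of_stable
    (N := (𝔪 • (⊤ : Submodule (MvPolynomial (Fin 2) K) Q)).restrictScalars K) (ρB := ρQ)
    (fun g _ hq ↦ map_mem_smul (hσ g) (hsemi g) (fun _ _ ↦ Submodule.mem_top) hq)
    (f := d.restrictScalars K) (fun g p ↦ by simp [hd]) hψ hzero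
  exact ⟨χ, mem_skyHom_iff.2 ⟨hχ, hχ𝔪⟩, LinearMap.ext hχd⟩

theorem nonempty_cohomology_equiv [NeZero (Nat.card G : K)]
    (hσ : ∀ g, ∀ r ∈ 𝔪, σ g r ∈ 𝔪) (hsemi : ∀ g r q, ρQ g (r • q) = σ g r • ρQ g q)
    (hd : ∀ g p, d (ρP g p) = ρQ g (d p)) (hex : d.ker = d'.range)
    (hk : IsTorPresentation 𝔪 d.range k)
    (hkG : ∀ g e, ρQ g (k e) - k (ρE g e) ∈ 𝔪 • d.range) :
    Nonempty
      ((↥(skyHom ρP ρW ⊓ LinearMap.ker (LinearMap.lcomp K W (d'.restrictScalars K))) ⧸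
          Submodule.comap
            (skyHom ρP ρW ⊓ LinearMap.ker (LinearMap.lcomp K W (d'.restrictScalars K))).subtype
            (Submodule.map (LinearMap.lcomp K W (d.restrictScalars K)) (skyHom ρQ ρW))) ≃ₗ[K]
        ↥(equivariantHoms ρE ρW)) := by
  obtain ⟨c, rfl⟩ := exists_comp_eq_of_range_le (d.restrictScalars K) k <| by
    rintro _ ⟨e, rfl⟩
    exact (hk.map_mem e).1
  have hcocycle {ψ : P →ₗ[K] W} (hψ : ψ ∈ skyHom ρP ρW)
      (hψd' : ψ ∈ (LinearMap.lcomp K W (d'.restrictScalars K)).ker) {p : P}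
      (hp : d p ∈ 𝔪 • d.range) : ψ p = 0 :=
    map_eq_zero_of_map_mem_smul_range hex (mem_skyHom_iff.1 hψ).2 (LinearMap.congr_fun hψd') hp
  refine nonempty_quotient_comap_equiv (LinearMap.lcomp K W c) ?_ ?_ fun θ hθ ↦
    exists_cocycle_comp_eq hσ hsemi hd (fun p ↦ hex.ge ⟨p, rfl⟩) hk.eq_zero_of_map_mem hkG hθ
  · rintro ψ ⟨hψ, hψd'⟩ g e
    have : ψ (ρP g (c e) - c (ρE g e)) = 0 := hcocycle hψ hψd' (by simpa [hd] using hkG g e)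
    rw [map_sub, sub_eq_zero, hψ.2] at this
    exact this.symm
  · rintro ψ ⟨hψ, hψd'⟩
    refine ⟨fun hψc ↦ exists_mem_skyHom_comp_eq hσ hsemi hd hψ.2 fun p hp ↦ ?_, ?_⟩
    · obtain ⟨e, he⟩ := hk.exists_sub_mem (d p) ⟨⟨p, rfl⟩, hp⟩
      have : ψ (p - c e) = 0 := hcocycle hψ hψd' (by simpa using he)
      rwa [map_sub, show ψ (c e) = 0 from LinearMap.congr_fun hψc e, sub_zero] at this
    · rintro ⟨χ, hχ, rfl⟩
      exact LinearMap.ext fun e ↦ (mem_skyHom_iff.1 hχ).2 _ (hk.map_mem e).2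

end Cohomology

section Koszul

open RingTheory.Sequence
open scoped Pointwise

lemma mem_span_range_smul_iff {R ι P : Type*} [CommRing R] [Fintype ι] [AddCommGroup P] [Module R P]
    {x : ι → R} {N : Submodule R P} {p : P} :
    p ∈ Ideal.span (Set.range x) • N ↔ ∃ a : ι → P, (∀ i, a i ∈ N) ∧ ∑ i, x i • a i = p := by
  classical
  refine ⟨fun hp ↦ ?_, ?_⟩
  · refine Submodule.smul_induction_on hp (fun r hr n hn ↦ ?_) ?_
    · obtain ⟨c, rfl⟩ := (Ideal.mem_span_range_iff_exists_fun).1 hr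
      exact ⟨fun i ↦ c i • n, fun i ↦ N.smul_mem _ hn, by
        simp only [Finset.sum_smul, mul_smul, smul_comm (x _)]⟩
    · rintro _ _ ⟨a, ha, rfl⟩ ⟨b, hb, rfl⟩
      exact ⟨a + b, fun i ↦ add_mem (ha i) (hb i), by simp [Finset.sum_add_distrib]⟩
  · rintro ⟨a, ha, rfl⟩
    exact sum_mem fun i _ ↦ Submodule.smul_mem_smul (Ideal.subset_span ⟨i, rfl⟩) (ha i)

lemma exists_eq_smul_of_isWeaklyRegular {R P : Type*} [CommRing R] [AddCommGroup P] [Module R P]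
    {x y : R} (h : IsWeaklyRegular P [x, y]) {v w : P} (hvw : x • v + y • w = 0) :
    ∃ a, v = y • a ∧ w = -(x • a) := by
  obtain ⟨hx, hy, -⟩ := by simpa only [isWeaklyRegular_cons_iff] using h
  obtain ⟨a, -, rfl⟩ : w ∈ x • (⊤ : Submodule R P) :=
    (isSMulRegular_quotient_iff_mem_of_smul_mem _ y).1 hy w <|
      (Submodule.mem_smul_pointwise_iff_exists _ _ _).2
        ⟨-v, trivial, by rw [smul_neg, eq_comm, ← add_eq_zero_iff_eq_neg', hvw]⟩
  refine ⟨-a, hx ?_, by simp⟩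
  simpa [eq_neg_iff_add_eq_zero, smul_comm x y] using hvw

lemma isWeaklyRegular_X_zero_X_one (K P : Type*) [Field K] [AddCommGroup P]
    [Module (MvPolynomial (Fin 2) K) P] [Module.Flat (MvPolynomial (Fin 2) K) P] :
    IsWeaklyRegular P [(X 0 : MvPolynomial (Fin 2) K), X 1] := by
  have h : IsWeaklyRegular (MvPolynomial (Fin 2) K) [(X 0 : MvPolynomial (Fin 2) K), X 1] := by
    simp only [isWeaklyRegular_cons_iff, IsWeaklyRegular.nil, and_true]
    refine ⟨isRegular_X.left.isSMulRegular,
      (isSMulRegular_quotient_iff_mem_of_smul_mem _ _).2 fun r hr ↦ ?_⟩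
    obtain ⟨q, -, hq⟩ := (Submodule.mem_smul_pointwise_iff_exists _ _ _).1 hr
    have : X 0 ∣ X 1 * r := ⟨q, hq.symm⟩
    rw [X_dvd_mul_iff, X_dvd_X] at this
    obtain ⟨q, rfl⟩ := this.resolve_left (by simp)
    exact Submodule.smul_mem_pointwise_smul q _ _ trivial
  exact ((TensorProduct.lid _ P).isWeaklyRegular_congr _).1 (h.isWeaklyRegular_rTensor (M₂ := P))

lemma map_eq_sum_single_one {ι R M : Type*} [Fintype ι] [DecidableEq ι] [CommRing R]
    [AddCommGroup M] [Module R M] (e : (ι → R) →ₗ[R] M) (v : ι → R) :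
    e v = ∑ i, v i • e (Pi.single i 1) := by
  conv_lhs => rw [← (Pi.basisFun R ι).sum_repr v, map_sum]
  simp

variable {K R G U P0 P1 : Type*} [Field K] [CommRing R] [Algebra K R] [Group G]
  [AddCommGroup U] [Module K U]
  [AddCommGroup P0] [Module K P0] [Module R P0]
  [AddCommGroup P1] [Module K P1] [Module R P1] [IsScalarTower K R P1]
  {x : Fin 2 → R} {ε : P0 →ₗ[K] U} {s : U →ₗ[K] P0} {Z : Submodule R P0}
  {σ : G →* (R ≃ₐ[K] R)} {ρV : Representation K G (Fin 2 → K)} {ρU : Representation K G U}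
  {ρ0 : Representation K G P0} {ρ1 : Representation K G P1}

lemma apply_mem_span_range (hx : ∀ g i, σ g (x i) = ∑ j, ρV g⁻¹ (Pi.single j 1) i • x j) (g : G)
    (i : Fin 2) : σ g (x i) ∈ Ideal.span (Set.range x) :=
  hx g i ▸ sum_mem fun j _ ↦ Submodule.smul_of_tower_mem _ _ (Ideal.subset_span ⟨j, rfl⟩)

section One

variable [IsScalarTower K R P0]

/-- The first Koszul map `U ⊗ V^∨ → P0`, `u ⊗ xᵢ ↦ xᵢ s(u)`, for a linear map `s : U → P0`. The
space `U ⊗ V^∨` is encoded as the space of linear maps `V → U`. -/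
def koszulOne (x : Fin 2 → R) (s : U →ₗ[K] P0) : ((Fin 2 → K) →ₗ[K] U) →ₗ[K] P0 :=
  ∑ i, Algebra.lsmul K K P0 (x i) ∘ₗ s ∘ₗ LinearMap.applyₗ (Pi.single i 1)

lemma koszulOne_apply (e : (Fin 2 → K) →ₗ[K] U) :
    koszulOne x s e = ∑ i, x i • s (e (Pi.single i 1)) := by
  simp [koszulOne]

lemma isTorPresentation_koszulOne (hreg : IsWeaklyRegular P0 [x 0, x 1])
    (hZ : ∀ p, p ∈ Z ↔ ε p = 0) (hεx : ∀ i p, ε (x i • p) = 0) (hs : ∀ u, ε (s u) = u) :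
    IsTorPresentation (Ideal.span (Set.range x)) Z (koszulOne x s) where
  map_mem e := by
    refine ⟨(hZ _).2 ?_, mem_span_range_smul_iff.2 ⟨_, fun _ ↦ trivial, (koszulOne_apply e).symm⟩⟩
    simp only [koszulOne_apply, map_sum, hεx, Finset.sum_const_zero]
  exists_sub_mem := by
    rintro q ⟨-, hq⟩
    obtain ⟨a, -, rfl⟩ := mem_span_range_smul_iff.1 hq
    refine ⟨(Pi.basisFun K (Fin 2)).constr K fun i ↦ ε (a i),
      mem_span_range_smul_iff.2 ⟨fun i ↦ a i - s (ε (a i)), fun i ↦ (hZ _).2 (by simp [hs]), ?_⟩⟩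
    simp only [koszulOne_apply, ← Pi.basisFun_apply, Module.Basis.constr_basis, smul_sub,
      Finset.sum_sub_distrib]
  eq_zero_of_map_mem e he := by
    obtain ⟨z, hz, hze⟩ := mem_span_range_smul_iff.1 he
    simp only [koszulOne_apply, Fin.sum_univ_two] at hze
    obtain ⟨a, h0, h1⟩ := exists_eq_smul_of_isWeaklyRegular hreg
      (v := s (e (Pi.single 0 1)) - z 0) (w := s (e (Pi.single 1 1)) - z 1) (by
        rw [smul_sub, smul_sub, sub_add_sub_comm, ← hze, sub_self])
    have h0 := congrArg ε h0
    have h1 := congrArg ε h1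
    simp only [map_sub, map_neg, hs, hεx, (hZ _).1 (hz _), sub_zero, neg_zero] at h0 h1
    exact (Pi.basisFun K (Fin 2)).ext (Fin.forall_fin_two.2 (by simpa using ⟨h0, h1⟩))

lemma koszulOne_linHom (hx : ∀ g i, σ g (x i) = ∑ j, ρV g⁻¹ (Pi.single j 1) i • x j)
    (g : G) (e : (Fin 2 → K) →ₗ[K] U) :
    koszulOne x s (ρV.linHom ρU g e) = ∑ i, σ g (x i) • s (ρU g (e (Pi.single i 1))) := by
  simp only [koszulOne_apply, Representation.linHom_apply, LinearMap.comp_apply,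
    map_eq_sum_single_one e (ρV _ _), hx, map_sum,
    map_smul, Finset.sum_smul, Finset.smul_sum, smul_assoc]
  rw [Finset.sum_comm]
  simp only [smul_comm (x _)]

lemma sub_koszulOne_mem (hx : ∀ g i, σ g (x i) = ∑ j, ρV g⁻¹ (Pi.single j 1) i • x j)
    (hsemi : ∀ g (r : R) p, ρ0 g (r • p) = σ g r • ρ0 g p)
    (hZ : ∀ p, p ∈ Z ↔ ε p = 0) (hεG : ∀ g p, ε (ρ0 g p) = ρU g (ε p)) (hs : ∀ u, ε (s u) = u)
    (g : G) (e : (Fin 2 → K) →ₗ[K] U) :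
    ρ0 g (koszulOne x s e) - koszulOne x s (ρV.linHom ρU g e) ∈ Ideal.span (Set.range x) • Z := by
  rw [koszulOne_linHom hx, koszulOne_apply, map_sum, ← Finset.sum_sub_distrib]
  refine sum_mem fun i _ ↦ ?_
  rw [hsemi, ← smul_sub]
  exact Submodule.smul_mem_smul (apply_mem_span_range hx g i) ((hZ _).2 (by simp [hεG, hs]))

end One

/-- The second Koszul map `U ⊗ det(V^∨) → P1`, `u ↦ x₀ t₁(u) - x₁ t₀(u)`, for linear maps
`t₀, t₁ : U → P1`. -/
def koszulTwo (x : Fin 2 → R) (t : Fin 2 → U →ₗ[K] P1) : U →ₗ[K] P1 :=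
  Algebra.lsmul K K P1 (x 0) ∘ₗ t 1 - Algebra.lsmul K K P1 (x 1) ∘ₗ t 0

/-- The twist of a representation by a multiplicative character. -/
def twist (χ : G →* K) (ρ : Representation K G U) : Representation K G U where
  toFun g := χ g • ρ g
  map_one' := by simp
  map_mul' g h := by rw [map_mul, map_mul, smul_mul_smul_comm]

variable {t : Fin 2 → U →ₗ[K] P1} {d1 : P1 →ₗ[R] P0}

lemma exists_lift_smul [IsScalarTower K R P0] (hex : ∀ p, p ∈ d1.range ↔ ε p = 0)
    (hεx : ∀ i p, ε (x i • p) = 0) (s : U →ₗ[K] P0) :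
    ∃ t : Fin 2 → U →ₗ[K] P1, ∀ i u, d1 (t i u) = x i • s u := by
  have hlift (i : Fin 2) : ∃ t, d1.restrictScalars K ∘ₗ t = Algebra.lsmul K K P0 (x i) ∘ₗ s :=
    exists_comp_eq_of_range_le _ _ <| by
      rintro _ ⟨u, rfl⟩
      exact (hex _).2 (hεx i (s u))
  choose t ht using hlift
  exact ⟨t, fun i ↦ LinearMap.congr_fun (ht i)⟩

lemma koszulTwo_apply (u : U) : koszulTwo x t u = x 0 • t 1 u - x 1 • t 0 u := rfl

lemma isTorPresentation_koszulTwo (hreg0 : IsWeaklyRegular P0 [x 0, x 1])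
    (hreg1 : IsWeaklyRegular P1 [x 0, x 1]) (hex : ∀ p, p ∈ d1.range ↔ ε p = 0)
    (hs : ∀ u, ε (s u) = u) (ht : ∀ i u, d1 (t i u) = x i • s u) :
    IsTorPresentation (Ideal.span (Set.range x)) d1.ker (koszulTwo x t) where
  map_mem u := by
    refine ⟨?_, mem_span_range_smul_iff.2 ⟨![t 1 u, -t 0 u], fun _ ↦ trivial, ?_⟩⟩
    · simp [koszulTwo_apply, ht, smul_smul, mul_comm]
    · simp [koszulTwo_apply, sub_eq_add_neg]
  exists_sub_mem := by
    rintro q ⟨hdq, hq⟩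
    obtain ⟨b, -, rfl⟩ := mem_span_range_smul_iff.1 hq
    obtain ⟨a, h0, h1⟩ := exists_eq_smul_of_isWeaklyRegular hreg0 (v := d1 (b 0)) (w := d1 (b 1))
      (by simpa using hdq)
    obtain ⟨y, hy⟩ := (hex (a - s (ε a))).2 (by simp [hs])
    refine ⟨ε a, mem_span_range_smul_iff.2
      ⟨![b 0 - t 1 (ε a) - x 1 • y, b 1 + t 0 (ε a) + x 0 • y], Fin.forall_fin_two.2 ⟨?_, ?_⟩, ?_⟩⟩
    · simp [h0, ht, hy, smul_sub]
    · simp [h1, ht, hy, smul_sub]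
    · simp only [koszulTwo_apply, Fin.sum_univ_two, Matrix.cons_val_zero, Matrix.cons_val_one]
      module
  eq_zero_of_map_mem u hu := by
    obtain ⟨z, hz, hzu⟩ := mem_span_range_smul_iff.1 hu
    rw [koszulTwo_apply, Fin.sum_univ_two] at hzu
    obtain ⟨a, -, ha⟩ := exists_eq_smul_of_isWeaklyRegular hreg1
      (v := t 1 u - z 0) (w := -(t 0 u + z 1)) (by
        rw [smul_sub, smul_neg, smul_add, ← sub_eq_zero.2 hzu.symm]
        abel)
    have hsu : x 0 • s u = x 0 • d1 a := by
      simpa [ht, LinearMap.mem_ker.1 (hz 1)] using congrArg d1 (neg_injective ha)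
    rw [← hs u, ← hex, ((isWeaklyRegular_cons_iff P0 _ _).1 hreg0).1 hsu]
    exact ⟨a, rfl⟩

lemma sub_koszulTwo_mem [IsScalarTower K R P0]
    (hx : ∀ g i, σ g (x i) = ∑ j, ρV g⁻¹ (Pi.single j 1) i • x j)
    (hsemi0 : ∀ g (r : R) p, ρ0 g (r • p) = σ g r • ρ0 g p)
    (hsemi1 : ∀ g (r : R) p, ρ1 g (r • p) = σ g r • ρ1 g p)
    (hd1 : ∀ g p, d1 (ρ1 g p) = ρ0 g (d1 p)) (hex : ∀ p, p ∈ d1.range ↔ ε p = 0)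
    (hεG : ∀ g p, ε (ρ0 g p) = ρU g (ε p)) (hs : ∀ u, ε (s u) = u)
    (ht : ∀ i u, d1 (t i u) = x i • s u) (g : G) (u : U) :
    ρ1 g (koszulTwo x t u) - koszulTwo x t (twist (LinearMap.det.comp ρV.dual) ρU g u) ∈
      Ideal.span (Set.range x) • d1.ker := by
  obtain ⟨y, hy⟩ := (hex (ρ0 g (s u) - s (ρU g u))).2 (by simp [hεG, hs])
  let m (i j : Fin 2) : K := ρV g⁻¹ (Pi.single j 1) i
  let z (i : Fin 2) : P1 := ρ1 g (t i u) - ∑ j, m i j • t j (ρU g u) - σ g (x i) • y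
  have hz (i : Fin 2) : z i ∈ d1.ker := by
    simp only [z, m, LinearMap.mem_ker, map_sub, map_add, LinearMap.map_smul_of_tower, map_smul,
      hd1, ht, hsemi0, hy, hx, Fin.sum_univ_two, Algebra.smul_def]
    module
  have hdet : LinearMap.det (ρV.dual g) = m 0 0 * m 1 1 - m 0 1 * m 1 0 := by
    refine (LinearMap.det_dualMap (ρV g⁻¹)).trans ?_
    rw [← LinearMap.det_toMatrix', Matrix.det_fin_two]
    simp [LinearMap.toMatrix'_apply, m]
  have hdecomp :
      ρ1 g (koszulTwo x t u) - koszulTwo x t (twist (LinearMap.det.comp ρV.dual) ρU g u) =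
        σ g (x 0) • z 1 - σ g (x 1) • z 0 := by
    have hχ : twist (LinearMap.det.comp ρV.dual) ρU g u =
        (m 0 0 * m 1 1 - m 0 1 * m 1 0) • ρU g u := by rw [← hdet]; rfl
    rw [hχ, map_smul]
    simp only [koszulTwo_apply, map_sub, hsemi1, z, m, hx, Fin.sum_univ_two, Algebra.smul_def]
    module
  rw [hdecomp]
  exact sub_mem (Submodule.smul_mem_smul (apply_mem_span_range hx g 0) (hz 1))
    (Submodule.smul_mem_smul (apply_mem_span_range hx g 1) (hz 0))

end Koszul

section Targets

variable {K G U W : Type*} [Field K] [Group G] [AddCommGroup U] [Module K U] [AddCommGroup W]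
  [Module K W] (φ : G →* ((Fin 2 → K) ≃ₗ[K] (Fin 2 → K))) (ρU : Representation K G U)
  (ρW : Representation K G W)

/-- The representation on `V = K²` given by a linear action `φ`. -/
def planeRep : Representation K G (Fin 2 → K) :=
  (LinearEquiv.automorphismGroup.toLinearMapMonoidHom).comp φ

lemma nonempty_equivariantHoms_linHom_equiv_ext1Target :
    Nonempty (↥(equivariantHoms ((planeRep φ).linHom ρU) ρW) ≃ₗ[K] ↥(ext1Target φ ρU ρW)) := by
  let Φ : (Fin 2 → U →ₗ[K] W) ≃ₗ[K] (((Fin 2 → K) →ₗ[K] U) →ₗ[K] W) :=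
    (LinearMap.lsum K (fun _ ↦ U) K).trans
      (((Pi.basisFun K (Fin 2)).constr K).arrowCongr (LinearEquiv.refl K W))
  have hΦ (q : Fin 2 → U →ₗ[K] W) (e : (Fin 2 → K) →ₗ[K] U) :
      Φ q e = ∑ i, q i (e (Pi.single i 1)) := by
    simp [Φ, LinearEquiv.arrowCongr_apply]
  have hΦg (q : Fin 2 → U →ₗ[K] W) (g : G) (e : (Fin 2 → K) →ₗ[K] U) :
      Φ q ((planeRep φ).linHom ρU g e) =
        ∑ i, ∑ j, φ g⁻¹ (Pi.single j 1) i • q j (ρU g (e (Pi.single i 1))) := by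
    simp only [hΦ, Representation.linHom_apply, LinearMap.comp_apply,
      map_eq_sum_single_one e (planeRep φ _ _), map_sum, map_smul]
    exact Finset.sum_comm
  have hcomap : ext1Target φ ρU ρW =
      (equivariantHoms ((planeRep φ).linHom ρU) ρW).comap Φ.toLinearMap := by
    ext q
    refine ⟨fun hq g e ↦ ?_, fun hq g i u ↦ ?_⟩
    · simp only [LinearEquiv.coe_coe, hΦg, hΦ, map_sum]
      exact Finset.sum_congr rfl fun i _ ↦ (hq g i _).symm
    · let e : (Fin 2 → K) →ₗ[K] U := (Pi.basisFun K (Fin 2)).constr K (Pi.single i u)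
      have he (i' : Fin 2) : e (Pi.single i' 1) = Pi.single (M := fun _ ↦ U) i u i' := by
        rw [← Pi.basisFun_apply, Module.Basis.constr_basis]
      have hsum : ∑ j, q j (Pi.single (M := fun _ ↦ U) i u j) = q i u := by
        rw [Finset.sum_eq_single i (fun _ _ h ↦ by simp [Pi.single_eq_of_ne h]) (by simp),
          Pi.single_eq_same]
      have hqe := hq g e
      simp only [LinearEquiv.coe_coe, hΦg, hΦ, he, hsum] at hqe
      rw [Finset.sum_eq_single i (fun _ _ h ↦ by simp [Pi.single_eq_of_ne h]) (by simp),
        Pi.single_eq_same] at hqe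
      exact hqe.symm
  exact ⟨(Φ.ofSubmodule' _).symm.trans (LinearEquiv.ofEq _ _ hcomap.symm)⟩

lemma equivariantHoms_twist_eq_ext2Target :
    equivariantHoms (twist (LinearMap.det.comp (planeRep φ).dual) ρU) ρW = ext2Target φ ρU ρW := by
  have hdet (g : G) : LinearMap.det ((planeRep φ).dual g) = LinearMap.det (planeRep φ g⁻¹) :=
    LinearMap.det_dualMap _
  ext ψ
  refine forall₂_congr fun g u ↦ ?_
  change ψ (LinearMap.det ((planeRep φ).dual g) • ρU g u) = _ ↔ _
  rw [hdet, map_smul, eq_comm]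
  rfl

end Targets

section Resolution

variable {K : Type*} [Field K]

lemma nonempty_equivariantHoms_equiv {G U W P0 P1 : Type*} [Group G] [AddCommGroup U] [Module K U]
    [AddCommGroup W] [Module K W] [AddCommGroup P0] [Module K P0]
    [Module (MvPolynomial (Fin 2) K) P0] [IsScalarTower K (MvPolynomial (Fin 2) K) P0]
    [AddCommGroup P1] [Module K P1] [Module (MvPolynomial (Fin 2) K) P1]
    [IsScalarTower K (MvPolynomial (Fin 2) K) P1]
    {ρ0 : Representation K G P0} {ρU : Representation K G U} {ρW : Representation K G W}
    {d1 : P1 →ₗ[MvPolynomial (Fin 2) K] P0} {ε : P0 →ₗ[K] U}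
    (hεsemi : ∀ (r : MvPolynomial (Fin 2) K) p, ε (r • p) = eval (0 : Fin 2 → K) r • ε p)
    (hεG : ∀ g p, ε (ρ0 g p) = ρU g (ε p)) (hε : Function.Surjective ε)
    (hex : ∀ p, p ∈ d1.range ↔ ε p = 0) :
    Nonempty (↥(skyHom ρ0 ρW ⊓ LinearMap.ker (LinearMap.lcomp K W (d1.restrictScalars K))) ≃ₗ[K]
      ↥(equivariantHoms ρU ρW)) := by
  have hmem (θ : U →ₗ[K] W) (hθ : θ ∈ equivariantHoms ρU ρW) : LinearMap.lcomp K W ε θ ∈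
      skyHom ρ0 ρW ⊓ LinearMap.ker (LinearMap.lcomp K W (d1.restrictScalars K)) :=
    ⟨⟨fun r p ↦ by simp [hεsemi], fun g p ↦ by simpa [hεG] using hθ g (ε p)⟩,
      LinearMap.ext fun p ↦ by simp [(hex _).1 ⟨p, rfl⟩]⟩
  refine ⟨(LinearEquiv.ofBijective ((LinearMap.lcomp K W ε).restrict hmem)
    ⟨fun θ θ' h ↦ ?_, ?_⟩).symm⟩
  · exact Subtype.ext ((LinearMap.cancel_right hε).1 (congrArg Subtype.val h))
  · rintro ⟨ψ, hψ, hψd⟩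
    obtain ⟨θ, rfl⟩ := exists_comp_eq_of_ker_le ε ψ fun p hp ↦ by
      obtain ⟨y, rfl⟩ := (hex p).2 hp
      exact LinearMap.congr_fun hψd y
    refine ⟨⟨θ, fun g u ↦ ?_⟩, rfl⟩
    obtain ⟨p, rfl⟩ := hε u
    simpa [hεG] using hψ.2 g p

variable {G : Type*} [Group G]
  {φ : G →* ((Fin 2 → K) ≃ₗ[K] (Fin 2 → K))}
  {σ : G →* (MvPolynomial (Fin 2) K ≃ₐ[K] MvPolynomial (Fin 2) K)}

lemma apply_X_eq_sum [Infinite K]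
    (hσ : ∀ g (f : MvPolynomial (Fin 2) K) (w : Fin 2 → K), eval w (σ g f) = eval (φ g⁻¹ w) f)
    (g : G) (i : Fin 2) : σ g (X i) = ∑ j, planeRep φ g⁻¹ (Pi.single j 1) i • X j := by
  refine MvPolynomial.funext fun w ↦ ?_
  rw [hσ, eval_X, ← LinearEquiv.coe_coe, map_eq_sum_single_one _ w]
  simp only [Finset.sum_apply, Pi.smul_apply, smul_eq_mul, map_sum, smul_eval, eval_X]
  exact Finset.sum_congr rfl fun j _ ↦ mul_comm _ _

lemma apply_mem_idealOfVars
    (hσ : ∀ g (f : MvPolynomial (Fin 2) K) (w : Fin 2 → K), eval w (σ g f) = eval (φ g⁻¹ w) f)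
    (g : G) (r : MvPolynomial (Fin 2) K) (hr : r ∈ idealOfVars (Fin 2) K) :
    σ g r ∈ idealOfVars (Fin 2) K := by
  have := sub_C_eval_zero_mem_idealOfVars (σ g r)
  rwa [hσ, map_zero, eval_zero_of_mem_idealOfVars hr, map_zero, sub_zero] at this

end Resolution

end EquivariantSkyscraper

open EquivariantSkyscraper in
theorem ext_equivariant_skyscrapers_general
    {K : Type*} [Field K] [Infinite K] {G : Type*} [Group G] [NeZero (Nat.card G : K)]
    (φ : G →* ((Fin 2 → K) ≃ₗ[K] (Fin 2 → K)))
    (σ : G →* (MvPolynomial (Fin 2) K ≃ₐ[K] MvPolynomial (Fin 2) K))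
    (hσ : ∀ (g : G) (f : MvPolynomial (Fin 2) K) (w : Fin 2 → K),
      MvPolynomial.eval w (σ g f) = MvPolynomial.eval (φ g⁻¹ w) f)
    {U W : Type*} [AddCommGroup U] [Module K U] [AddCommGroup W] [Module K W]
    (ρU : Representation K G U) (ρW : Representation K G W)
    {P0 P1 P2 P3 : Type*}
    [AddCommGroup P0] [Module K P0] [Module (MvPolynomial (Fin 2) K) P0]
    [IsScalarTower K (MvPolynomial (Fin 2) K) P0] [Module.Flat (MvPolynomial (Fin 2) K) P0]
    [AddCommGroup P1] [Module K P1] [Module (MvPolynomial (Fin 2) K) P1]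
    [IsScalarTower K (MvPolynomial (Fin 2) K) P1] [Module.Flat (MvPolynomial (Fin 2) K) P1]
    [AddCommGroup P2] [Module K P2] [Module (MvPolynomial (Fin 2) K) P2]
    [IsScalarTower K (MvPolynomial (Fin 2) K) P2]
    [AddCommGroup P3] [Module K P3] [Module (MvPolynomial (Fin 2) K) P3]
    [IsScalarTower K (MvPolynomial (Fin 2) K) P3]
    (ρ0 : Representation K G P0) (ρ1 : Representation K G P1) (ρ2 : Representation K G P2)
    (hsemi0 : ∀ (g : G) (r : MvPolynomial (Fin 2) K) (p : P0), ρ0 g (r • p) = σ g r • ρ0 g p)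
    (hsemi1 : ∀ (g : G) (r : MvPolynomial (Fin 2) K) (p : P1), ρ1 g (r • p) = σ g r • ρ1 g p)
    (d1 : P1 →ₗ[MvPolynomial (Fin 2) K] P0)
    (d2 : P2 →ₗ[MvPolynomial (Fin 2) K] P1)
    (d3 : P3 →ₗ[MvPolynomial (Fin 2) K] P2)
    (hd1equiv : ∀ (g : G) (p : P1), d1 (ρ1 g p) = ρ0 g (d1 p))
    (hd2equiv : ∀ (g : G) (p : P2), d2 (ρ2 g p) = ρ1 g (d2 p))
    (ε : P0 →ₗ[K] U)
    (hεsemi : ∀ (r : MvPolynomial (Fin 2) K) (p : P0),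
      ε (r • p) = MvPolynomial.eval (0 : Fin 2 → K) r • ε p)
    (hεequiv : ∀ (g : G) (p : P0), ε (ρ0 g p) = ρU g (ε p))
    (hεsurj : Function.Surjective ε)
    (hex0 : (LinearMap.ker ε : Set P0) = (LinearMap.range d1 : Set P0))
    (hex1 : LinearMap.ker d1 = LinearMap.range d2)
    (hex2 : LinearMap.ker d2 = LinearMap.range d3) :
    Nonempty
      ((↥(skyHom ρ0 ρW ⊓
          LinearMap.ker (LinearMap.lcomp K W (d1.restrictScalars K)))) ≃ₗ[K]
        ↥(equivariantHoms ρU ρW)) ∧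
    Nonempty
      ((↥(skyHom ρ1 ρW ⊓
            LinearMap.ker (LinearMap.lcomp K W (d2.restrictScalars K))) ⧸
          Submodule.comap
            (skyHom ρ1 ρW ⊓
              LinearMap.ker (LinearMap.lcomp K W (d2.restrictScalars K))).subtype
            (Submodule.map (LinearMap.lcomp K W (d1.restrictScalars K))
              (skyHom ρ0 ρW))) ≃ₗ[K]
        ↥(ext1Target φ ρU ρW)) ∧
    Nonempty
      ((↥(skyHom ρ2 ρW ⊓
            LinearMap.ker (LinearMap.lcomp K W (d3.restrictScalars K))) ⧸
          Submodule.comap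
            (skyHom ρ2 ρW ⊓
              LinearMap.ker (LinearMap.lcomp K W (d3.restrictScalars K))).subtype
            (Submodule.map (LinearMap.lcomp K W (d2.restrictScalars K))
              (skyHom ρ1 ρW))) ≃ₗ[K]
        ↥(ext2Target φ ρU ρW)) := by
  have hex (p : P0) : p ∈ d1.range ↔ ε p = 0 := (Set.ext_iff.1 hex0 p).symm
  have hεX (i : Fin 2) (p : P0) : ε ((MvPolynomial.X i : MvPolynomial (Fin 2) K) • p) = 0 := by
    simp [hεsemi]
  obtain ⟨s, hs⟩ := ε.exists_rightInverse_of_surjective (LinearMap.range_eq_top.2 hεsurj)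
  replace hs (u : U) : ε (s u) = u := LinearMap.congr_fun hs u
  obtain ⟨t, ht⟩ := exists_lift_smul hex hεX s
  have hX := apply_X_eq_sum hσ
  have h𝔪 := apply_mem_idealOfVars hσ
  have hreg0 := isWeaklyRegular_X_zero_X_one K P0
  have hreg1 := isWeaklyRegular_X_zero_X_one K P1
  refine ⟨nonempty_equivariantHoms_equiv hεsemi hεequiv hεsurj hex, ?_, ?_⟩
  · obtain ⟨e⟩ := nonempty_equivariantHoms_linHom_equiv_ext1Target φ ρU ρW
    obtain ⟨f⟩ := nonempty_cohomology_equiv (ρW := ρW) h𝔪 hsemi0 hd1equiv hex1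
      (isTorPresentation_koszulOne hreg0 hex hεX hs)
      (sub_koszulOne_mem hX hsemi0 hex hεequiv hs)
    exact ⟨f.trans e⟩
  · rw [← equivariantHoms_twist_eq_ext2Target]
    exact nonempty_cohomology_equiv h𝔪 hsemi1 hd2equiv hex2
      (hex1 ▸ isTorPresentation_koszulTwo hreg0 hreg1 hex hs ht)
      (hex1 ▸ sub_koszulTwo_mem hX hsemi0 hsemi1 hd1equiv hex hεequiv hs ht)

/-!
STATEMENT 19: equivariant `Ext` groups between twisted skyscraper sheaves at the origin
of `V = K²` (char `K = 0`).  A finite group `G` acts linearly on `V` via `φ`, hence on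
`R = K[x,y]` via `σ`; `U`, `W` are finite-dimensional `G`-representations and `O₀ ⊗ U`,
`O₀ ⊗ W` are the corresponding equivariant skyscraper modules at the `G`-fixed origin
(`R` acting through evaluation at `0`).  `Ext^i_G(O₀ ⊗ U, O₀ ⊗ W)` is computed from any
`G`-equivariant resolution `⋯ → P₂ → P₁ → P₀ → O₀ ⊗ U → 0` by projective `R`-modules as
the `i`-th cohomology of the complex of equivariant `R`-module maps `Pᵢ → O₀ ⊗ W`.  The
claims: `Ext⁰ ≅ Hom_G(U, W)`, `Ext¹ ≅ Hom_G(U ⊗ V^∨, W)` and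
`Ext² ≅ Hom_G(U ⊗ det(V^∨), W)`.
-/
theorem ext_equivariant_skyscrapers
    {K : Type*} [Field K] [CharZero K]
    {G : Type*} [Group G] [Finite G]
    (φ : G →* ((Fin 2 → K) ≃ₗ[K] (Fin 2 → K)))
    (σ : G →* (MvPolynomial (Fin 2) K ≃ₐ[K] MvPolynomial (Fin 2) K))
    (hσ : ∀ (g : G) (f : MvPolynomial (Fin 2) K) (w : Fin 2 → K),
      MvPolynomial.eval w (σ g f) = MvPolynomial.eval (φ g⁻¹ w) f)
    {U : Type*} [AddCommGroup U] [Module K U] [FiniteDimensional K U]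
    {W : Type*} [AddCommGroup W] [Module K W] [FiniteDimensional K W]
    (ρU : Representation K G U) (ρW : Representation K G W)
    -- a `G`-equivariant projective resolution `P₃ → P₂ → P₁ → P₀ → O₀ ⊗ U → 0`:
    {P0 P1 P2 P3 : Type*}
    [AddCommGroup P0] [Module K P0] [Module (MvPolynomial (Fin 2) K) P0]
    [IsScalarTower K (MvPolynomial (Fin 2) K) P0]
    [Module.Projective (MvPolynomial (Fin 2) K) P0]
    [AddCommGroup P1] [Module K P1] [Module (MvPolynomial (Fin 2) K) P1]
    [IsScalarTower K (MvPolynomial (Fin 2) K) P1]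
    [Module.Projective (MvPolynomial (Fin 2) K) P1]
    [AddCommGroup P2] [Module K P2] [Module (MvPolynomial (Fin 2) K) P2]
    [IsScalarTower K (MvPolynomial (Fin 2) K) P2]
    [Module.Projective (MvPolynomial (Fin 2) K) P2]
    [AddCommGroup P3] [Module K P3] [Module (MvPolynomial (Fin 2) K) P3]
    [IsScalarTower K (MvPolynomial (Fin 2) K) P3]
    [Module.Projective (MvPolynomial (Fin 2) K) P3]
    (ρ0 : Representation K G P0) (ρ1 : Representation K G P1)
    (ρ2 : Representation K G P2) (ρ3 : Representation K G P3)
    (hsemi0 : ∀ (g : G) (r : MvPolynomial (Fin 2) K) (p : P0),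
      ρ0 g (r • p) = (σ g r) • ρ0 g p)
    (hsemi1 : ∀ (g : G) (r : MvPolynomial (Fin 2) K) (p : P1),
      ρ1 g (r • p) = (σ g r) • ρ1 g p)
    (hsemi2 : ∀ (g : G) (r : MvPolynomial (Fin 2) K) (p : P2),
      ρ2 g (r • p) = (σ g r) • ρ2 g p)
    (hsemi3 : ∀ (g : G) (r : MvPolynomial (Fin 2) K) (p : P3),
      ρ3 g (r • p) = (σ g r) • ρ3 g p)
    (d1 : P1 →ₗ[MvPolynomial (Fin 2) K] P0)
    (d2 : P2 →ₗ[MvPolynomial (Fin 2) K] P1)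
    (d3 : P3 →ₗ[MvPolynomial (Fin 2) K] P2)
    (hd1equiv : ∀ (g : G) (p : P1), d1 (ρ1 g p) = ρ0 g (d1 p))
    (hd2equiv : ∀ (g : G) (p : P2), d2 (ρ2 g p) = ρ1 g (d2 p))
    (hd3equiv : ∀ (g : G) (p : P3), d3 (ρ3 g p) = ρ2 g (d3 p))
    (ε : P0 →ₗ[K] U)
    (hεsemi : ∀ (r : MvPolynomial (Fin 2) K) (p : P0),
      ε (r • p) = (MvPolynomial.eval (0 : Fin 2 → K) r) • ε p)
    (hεequiv : ∀ (g : G) (p : P0), ε (ρ0 g p) = ρU g (ε p))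
    (hεsurj : Function.Surjective ε)
    (hex0 : (LinearMap.ker ε : Set P0) = (LinearMap.range d1 : Set P0))
    (hex1 : LinearMap.ker d1 = LinearMap.range d2)
    (hex2 : LinearMap.ker d2 = LinearMap.range d3) :
    -- `Ext⁰_G(O₀ ⊗ U, O₀ ⊗ W) ≅ Hom_G(U, W)`
    Nonempty
      ((↥(skyHom ρ0 ρW ⊓
          LinearMap.ker (LinearMap.lcomp K W (d1.restrictScalars K)))) ≃ₗ[K]
        ↥(equivariantHoms ρU ρW)) ∧
    -- `Ext¹_G(O₀ ⊗ U, O₀ ⊗ W) ≅ Hom_G(U ⊗ V^∨, W)`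
    Nonempty
      ((↥(skyHom ρ1 ρW ⊓
            LinearMap.ker (LinearMap.lcomp K W (d2.restrictScalars K))) ⧸
          Submodule.comap
            (skyHom ρ1 ρW ⊓
              LinearMap.ker (LinearMap.lcomp K W (d2.restrictScalars K))).subtype
            (Submodule.map (LinearMap.lcomp K W (d1.restrictScalars K))
              (skyHom ρ0 ρW))) ≃ₗ[K]
        ↥(ext1Target φ ρU ρW)) ∧
    -- `Ext²_G(O₀ ⊗ U, O₀ ⊗ W) ≅ Hom_G(U ⊗ det(V^∨), W)`
    Nonempty
      ((↥(skyHom ρ2 ρW ⊓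
            LinearMap.ker (LinearMap.lcomp K W (d3.restrictScalars K))) ⧸
          Submodule.comap
            (skyHom ρ2 ρW ⊓
              LinearMap.ker (LinearMap.lcomp K W (d3.restrictScalars K))).subtype
            (Submodule.map (LinearMap.lcomp K W (d2.restrictScalars K))
              (skyHom ρ1 ρW))) ≃ₗ[K]
        ↥(ext2Target φ ρU ρW)) := by
  have : NeZero (Nat.card G : K) := ⟨Nat.cast_ne_zero.2 Nat.card_pos.ne'⟩
  exact ext_equivariant_skyscrapers_general φ σ hσ ρU ρW ρ0 ρ1 ρ2 hsemi0 hsemi1 d1 d2 d3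
    hd1equiv hd2equiv ε hεsemi hεequiv hεsurj hex0 hex1 hex2

end
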